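/- Let δ be the least ordinal with X_δ = X_{δ+1}. Then δ is not a successor ordinal. -/

import Mathlib

open Set Topology

noncomputable section

/-- A set is an `Fσ` set if it is a countable union of closed sets. -/
def IsFSigma {X : Type*} [TopologicalSpace X] (s : Set X) : Prop :=
  ∃ F : ℕ → Set X, (∀ n, IsClosed (F n)) ∧ s = ⋃ n, F n

/-- A topological space is an `F`-space if any two disjoint open `Fσ` subsets
have disjoint closures. -/
def IsFSpace (X : Type*) [TopologicalSpace X] : Prop :=
  ∀ s t : Set X, IsOpen s → IsOpen t → IsFSigma s → IsFSigma t → Disjoint s t →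
    Disjoint (closure s) (closure t)

/-- `𝐒 = ℕ × [0,1]²` where `ℕ` is discrete and `[0,1]` is the unit interval. -/
abbrev bS : Type := ℕ × (unitInterval × unitInterval)

/-- `βπ : β𝐒 → βℕ`, the Stone–Čech extension of the projection `π(n,x,y) = n`. -/
def betaPi : StoneCech bS → StoneCech ℕ :=
  stoneCechExtend (continuous_stoneCechUnit.comp continuous_fst)

/-- `βf : β𝐒 → [0,1]`, the Stone–Čech extension of `f(n,x,y) = x`. -/
def betaF : StoneCech bS → unitInterval :=
  stoneCechExtend (continuous_fst.comp continuous_snd)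

/-- `S_u = βπ⁻¹(u)`, as a subset of `β𝐒` (carrying the subspace topology). -/
def Su (u : StoneCech ℕ) : Set (StoneCech bS) := betaPi ⁻¹' {u}

/-- `f_u : S_u → [0,1]`, the restriction of `βf` to `S_u`. -/
def fu (u : StoneCech ℕ) : (Su u) → unitInterval := fun z => betaF z.1

/-- `L_t = f_u⁻¹(t) ∩ cl_{S_u} f_u⁻¹([0,t))`. -/
def Lset (u : StoneCech ℕ) (t : unitInterval) : Set (Su u) :=
  fu u ⁻¹' {t} ∩ closure (fu u ⁻¹' (Set.Ico 0 t))

/-- `R_t = f_u⁻¹(t) ∩ cl_{S_u} f_u⁻¹((t,1])`. -/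
def Rset (u : StoneCech ℕ) (t : unitInterval) : Set (Su u) :=
  fu u ⁻¹' {t} ∩ closure (fu u ⁻¹' (Set.Ioc t 1))

/-- The rectangle `P_{s,r} = S_u ∩ cl_{β𝐒}(ℕ × [s,r] × I)`, viewed as a subset of `S_u`. -/
def Pset (u : StoneCech ℕ) (s r : unitInterval) : Set (Su u) :=
  Subtype.val ⁻¹' closure (stoneCechUnit '' {p : bS | p.2.1 ∈ Set.Icc s r})

/-- `L_{s,t} = cl_{S_u}(⋃_{s<r<t} P_{s,r})`. -/
def Lst (u : StoneCech ℕ) (s t : unitInterval) : Set (Su u) :=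
  closure (⋃ r ∈ Set.Ioo s t, Pset u s r)

/-- The interior of `B` in the subspace `A`, viewed as a subset of the ambient space. -/
def relInt {Y : Type*} [TopologicalSpace Y] (A B : Set Y) : Set Y :=
  Subtype.val '' interior ((Subtype.val : A → Y) ⁻¹' B)

/-- The transfinite sequence `X_α ⊆ S_u`: `X_0 = S_u`,
`X_{α+1} = X_α \ ⋃_{t} Int_{X_α}(X_α ∩ f_u⁻¹(t))`, and `X_λ = ⋂_{β<λ} X_β` at limits. -/
def Xseq (u : StoneCech ℕ) : Ordinal → Set (Su u) := fun α =>
  Ordinal.limitRecOn α Set.univ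
    (fun _ Xa => Xa \ ⋃ t : unitInterval, relInt Xa (Xa ∩ fu u ⁻¹' {t}))
    (fun o _ ih => ⋂ (β : {β : Ordinal // β < o}), ih β.1 β.2)

/-- The bottom line `B_u = S_u ∩ cl_{β𝐒}(ℕ × I × {0})`, viewed as a subset of `S_u`. -/
def Bu (u : StoneCech ℕ) : Set (Su u) :=
  Subtype.val ⁻¹' closure (stoneCechUnit '' {p : bS | p.2.2 = 0})

/-- The top line `T_u = S_u ∩ cl_{β𝐒}(ℕ × I × {1})`, viewed as a subset of `S_u`. -/
def Tu (u : StoneCech ℕ) : Set (Su u) :=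
  Subtype.val ⁻¹' closure (stoneCechUnit '' {p : bS | p.2.2 = 1})

def der {K : Type*} [TopologicalSpace K] (f : K → ℝ) (A : Set K) : Set K :=
  {x | x ∈ A ∧ ∀ O : Set K, IsOpen O → x ∈ O → ∃ y ∈ O ∩ A, f y ≠ f x}

lemma der_closed {K : Type*} [TopologicalSpace K] (f : K → ℝ) {A : Set K} (hA : IsClosed A) :
    IsClosed (der f A) := by
  rw [← closure_subset_iff_isClosed]
  intro x hx
  have hsub : der f A ⊆ A := fun y hy => hy.1
  refine ⟨hA.closure_subset_iff.2 hsub hx, fun O hO hxO => ?_⟩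
  obtain ⟨y, hyO, hy⟩ := mem_closure_iff.1 hx O hO hxO
  by_cases h : f y = f x
  · obtain ⟨y', hy', hne⟩ := hy.2 O hO hyO
    exact ⟨y', hy', fun e => hne (e.trans h.symm)⟩
  · exact ⟨y, ⟨hyO, hy.1⟩, h⟩

lemma fsigma_lt {K : Type*} [TopologicalSpace K] {g : K → ℝ} (hg : Continuous g) (c : ℝ) :
    ∃ F : ℕ → Set K, (∀ n, IsClosed (F n)) ∧ {x | g x < c} = ⋃ n, F n := by
  refine ⟨fun n => {x | g x ≤ c - 1 / ((n : ℝ) + 1)}, fun n => isClosed_le hg continuous_const, ?_⟩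
  ext x
  simp only [mem_setOf_eq, mem_iUnion]
  constructor
  · intro h
    obtain ⟨n, hn⟩ := exists_nat_one_div_lt (sub_pos.2 h)
    exact ⟨n, by linarith⟩
  · rintro ⟨n, hn⟩
    have : (0 : ℝ) < 1 / ((n : ℝ) + 1) := Nat.one_div_pos_of_nat
    linarith

lemma fsigma_iUnion {K : Type*} [TopologicalSpace K] {V : ℕ → Set K}
    (h : ∀ n, IsFSigma (V n)) : IsFSigma (⋃ n, V n) := by
  choose F hF hV using h
  refine ⟨fun k => F k.unpair.1 k.unpair.2, fun k => hF _ _, ?_⟩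
  ext x
  simp only [mem_iUnion]
  constructor
  · rintro ⟨n, hn⟩
    rw [hV n, mem_iUnion] at hn
    obtain ⟨m, hm⟩ := hn
    exact ⟨Nat.pair n m, by simpa using hm⟩
  · rintro ⟨k, hk⟩
    refine ⟨k.unpair.1, ?_⟩
    rw [hV, mem_iUnion]
    exact ⟨_, hk⟩

lemma fsigma_inter {K : Type*} [TopologicalSpace K] {V W : Set K}
    (hV : IsFSigma V) (hW : IsFSigma W) : IsFSigma (V ∩ W) := by
  obtain ⟨F, hF, rfl⟩ := hV
  obtain ⟨F', hF', rfl⟩ := hW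
  rw [iUnion_inter]
  refine fsigma_iUnion fun n => ?_
  rw [inter_iUnion]
  exact fsigma_iUnion fun m => ⟨fun _ => F n ∩ F' m, fun _ => (hF n).inter (hF' m), (iUnion_const _).symm⟩

lemma fsigma_fin {K : Type*} [TopologicalSpace K] {V : ℕ → Set K}
    (h : ∀ n, IsFSigma (V n)) (k : ℕ) : IsFSigma (⋂ n ∈ Set.Iio k, V n) := by
  induction k with
  | zero => exact ⟨fun _ => univ, fun _ => isClosed_univ, by rw [iUnion_const]; simp⟩
  | succ k ih =>
    have : (⋂ n ∈ Set.Iio (k+1), V n) = (⋂ n ∈ Set.Iio k, V n) ∩ V k := by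
      ext x
      simp only [mem_iInter, mem_inter_iff, mem_Iio]
      constructor
      · exact fun H => ⟨fun i hi => H i (by omega), H k (by omega)⟩
      · rintro ⟨H, H'⟩ i hi
        rcases Nat.lt_succ_iff_lt_or_eq.1 hi with h | rfl
        · exact H i h
        · exact H'
    rw [this]
    exact fsigma_inter ih (h k)

lemma der_ne {K : Type*} [TopologicalSpace K] [CompactSpace K] [T2Space K]
    (hK : IsFSpace K) {f : K → ℝ} (hf : Continuous f) (hf1 : ∀ x, f x ≤ 1) {A : Set K}
    (hA : IsClosed A) (h : ∀ c < 1, ∃ z ∈ A, z ∉ der f A ∧ c < f z ∧ f z < 1) :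
    der f A ≠ der f (der f A) := by
  have hA' := der_closed f hA
  let c : ℕ → ℝ := fun n => 1 - 1 / ((n : ℝ) + 1)
  have hc1 : ∀ n, c n < 1 := fun n => by
    have : (0 : ℝ) < 1 / ((n : ℝ) + 1) := Nat.one_div_pos_of_nat
    simp only [c]; linarith
  have hcm : ∀ m n, m ≤ n → c m ≤ c n := fun m n hmn => by
    have := Nat.one_div_le_one_div (α := ℝ) hmn
    simp only [c]; linarith
  have hct : ∀ x < 1, ∃ n, x < c n := fun x hx => by
    obtain ⟨n, hn⟩ := exists_nat_one_div_lt (sub_pos.2 hx)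
    exact ⟨n, by simp only [c]; linarith⟩
  choose z hzA hz' hzc hz1 using fun n => h (c n) (hc1 n)
  have hH : ∀ n, ∃ g : C(K, ℝ), Set.EqOn g 0 (der f A ∪ {x | f x ≤ c n}) ∧ g (z n) = 1 := by
    intro n
    obtain ⟨g, h0, h1, -⟩ := exists_continuous_zero_one_of_isClosed
      (s := der f A ∪ {x | f x ≤ c n}) (t := {z n})
      (hA'.union (isClosed_le hf continuous_const)) isClosed_singleton
      (by
        rw [Set.disjoint_singleton_right]
        rintro (h | h)
        · exact hz' n h
        · exact absurd (hzc n) (not_lt.2 h))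
    exact ⟨g, h0, h1 rfl⟩
  choose g hg0 hg1 using hH
  let V : Set K := ⋃ n, {x | - g n x < -(1/2)}
  let W : Set K := ⋃ k, {x | f x < c k} ∩ ⋂ n ∈ Set.Iio k, {x | g n x < 1/2}
  have hVo : IsOpen V := isOpen_iUnion fun n => isOpen_lt (by fun_prop) continuous_const
  have hWo : IsOpen W := isOpen_iUnion fun k => (isOpen_lt hf continuous_const).inter
    ((Set.finite_Iio k).isOpen_biInter fun n _ => isOpen_lt (by fun_prop) continuous_const)
  have hVF : IsFSigma V := fsigma_iUnion fun n => fsigma_lt (by fun_prop) _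
  have hWF : IsFSigma W := fsigma_iUnion fun k => fsigma_inter (fsigma_lt hf _)
    (fsigma_fin (fun n => fsigma_lt (by fun_prop) _) k)
  have hVW : Disjoint V W := by
    rw [Set.disjoint_left]
    intro x hxV hxW
    simp only [V, W, mem_iUnion, mem_inter_iff, mem_setOf_eq, mem_iInter, mem_Iio] at hxV hxW
    obtain ⟨n, hn⟩ := hxV
    obtain ⟨k, hk, hk'⟩ := hxW
    rcases lt_or_ge n k with hnk | hnk
    · have := hk' n hnk
      linarith
    · have : g n x = 0 := hg0 n (Or.inr (hk.le.trans (hcm _ _ hnk)))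
      rw [this] at hn; norm_num at hn
  have hdisj := hK V W hVo hWo hVF hWF hVW
  obtain ⟨p, hp⟩ := exists_clusterPt_of_compactSpace (Filter.map z Filter.atTop)
  have hfreq : ∀ O : Set K, IsOpen O → p ∈ O → ∀ N, ∃ n ≥ N, z n ∈ O := by
    intro O hO hpO N
    have := (mapClusterPt_iff_frequently.1 hp) O (hO.mem_nhds hpO)
    exact (Filter.frequently_atTop.1 this) N
  have hpA : p ∈ A := by
    rw [← hA.closure_eq, mem_closure_iff]
    intro O hO hpO
    obtain ⟨n, -, hn⟩ := hfreq O hO hpO 0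
    exact ⟨_, hn, hzA n⟩
  have hpV : p ∈ closure V := by
    rw [mem_closure_iff]
    intro O hO hpO
    obtain ⟨n, -, hn⟩ := hfreq O hO hpO 0
    refine ⟨_, hn, mem_iUnion.2 ⟨n, ?_⟩⟩
    simp only [mem_setOf_eq, hg1]; norm_num
  have hfp : f p = 1 := by
    by_contra hne
    obtain ⟨N, hN⟩ := hct (f p) (lt_of_le_of_ne (hf1 p) hne)
    obtain ⟨n, hn, hn'⟩ := hfreq {x | f x < c N} (isOpen_lt hf continuous_const) hN N
    have h1 := hzc n
    have h2 := hcm _ _ hn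
    simp only [mem_setOf_eq] at hn'
    linarith
  have hp' : p ∈ der f A := by
    refine ⟨hpA, fun O hO hpO => ?_⟩
    obtain ⟨n, -, hn⟩ := hfreq O hO hpO 0
    exact ⟨z n, ⟨hn, hzA n⟩, by rw [hfp]; exact (hz1 n).ne⟩
  intro heq
  have hp'' := heq ▸ hp'
  obtain ⟨y, ⟨hyW, hy⟩, hyne⟩ := hp''.2 (closure W)ᶜ isClosed_closure.isOpen_compl
    (Set.disjoint_left.1 hdisj hpV)
  rw [hfp] at hyne
  obtain ⟨k, hk⟩ := hct (f y) (lt_of_le_of_ne (hf1 y) hyne)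
  refine hyW (subset_closure (mem_iUnion.2 ⟨k, hk, ?_⟩))
  simp only [mem_iInter, mem_setOf_eq]
  intro n _
  have : g n y = 0 := hg0 n (Or.inl hy)
  rw [this]; norm_num

lemma der_preimage {K : Type*} [TopologicalSpace K] {f : K → ℝ} (hf : Continuous f)
    {G : K → K} (hGc : Continuous G) (hGo : IsOpenMap G)
    (hfG : ∀ x, f (G x) = |2 * f x - 1|) {A : Set K} (hGA : ∀ x, G x ∈ A ↔ x ∈ A) (x : K) :
    G x ∈ der f A ↔ x ∈ der f A := by
  constructor
  · rintro ⟨h1, h2⟩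
    refine ⟨(hGA x).1 h1, fun O hO hxO => ?_⟩
    obtain ⟨_, ⟨⟨y, hyO, rfl⟩, hyA⟩, hne⟩ := h2 _ (hGo O hO) ⟨x, hxO, rfl⟩
    refine ⟨y, ⟨hyO, (hGA y).1 hyA⟩, fun e => hne ?_⟩
    rw [hfG, hfG, e]
  · rintro ⟨h1, h2⟩
    refine ⟨(hGA x).2 h1, fun O hO hxO => ?_⟩
    by_cases hx : 2 * f x - 1 = 0
    · obtain ⟨y, ⟨hyO, hyA⟩, hne⟩ := h2 _ (hO.preimage hGc) hxO
      refine ⟨G y, ⟨hyO, (hGA y).2 hyA⟩, ?_⟩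
      rw [hfG, hfG, hx, abs_zero]
      intro e
      have := abs_eq_zero.1 e
      exact hne (by linarith)
    · obtain ⟨y, ⟨⟨hyO, hy⟩, hyA⟩, hne⟩ := h2 (G ⁻¹' O ∩ {y | |f y - f x| < |2 * f x - 1|})
        ((hO.preimage hGc).inter (isOpen_lt (by fun_prop) continuous_const))
        ⟨hxO, by simpa using hx⟩
      refine ⟨G y, ⟨hyO, (hGA y).2 hyA⟩, ?_⟩
      rw [hfG, hfG]
      intro e
      rcases abs_eq_abs.1 e with e | e
      · exact hne (by linarith)
      · have : f y - f x = -(2 * f x - 1) := by linarith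
        simp only [mem_setOf_eq, this, abs_neg, lt_self_iff_false] at hy

lemma der_step {K : Type*} [TopologicalSpace K] [CompactSpace K] [T2Space K]
    (hK : IsFSpace K) {f : K → ℝ} (hf : Continuous f) (hf0 : ∀ x, 0 ≤ f x) (hf1 : ∀ x, f x ≤ 1)
    {G J σ : K → K} (hGc : Continuous G) (hGo : IsOpenMap G)
    (hfG : ∀ x, f (G x) = |2 * f x - 1|) (hGJ : ∀ x, G (J x) = x) (hGσ : ∀ x, G (σ x) = G x)
    (hfJ : ∀ x, f (J x) = (1 + f x) / 2) (hfσ : ∀ x, f (σ x) = 1 - f x)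
    {A : Set K} (hA : IsClosed A)
    (hGA : ∀ x, G x ∈ A ↔ x ∈ A) (hne : A ≠ der f A) : der f A ≠ der f (der f A) := by
  refine der_ne hK hf hf1 hA ?_
  have hJ : ∀ z, z ∈ A ∧ z ∉ der f A → J z ∈ A ∧ J z ∉ der f A := fun z hz => by
    rw [← der_preimage hf hGc hGo hfG hGA, ← hGA, hGJ]; exact hz
  have hσ : ∀ z, z ∈ A ∧ z ∉ der f A → σ z ∈ A ∧ σ z ∉ der f A := fun z hz => by
    rw [← der_preimage hf hGc hGo hfG hGA, ← hGA, hGσ, hGA, der_preimage hf hGc hGo hfG hGA]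
    exact hz
  obtain ⟨z, hz⟩ : ∃ z, z ∈ A ∧ z ∉ der f A := by
    by_contra! H
    exact hne (Subset.antisymm H fun y hy => hy.1)
  obtain ⟨z, hz, hz1⟩ : ∃ z, (z ∈ A ∧ z ∉ der f A) ∧ f z < 1 := by
    rcases (hf1 z).lt_or_eq with h | h
    · exact ⟨z, hz, h⟩
    · exact ⟨σ z, hσ z hz, by rw [hfσ, h]; norm_num⟩
  have key : ∀ n : ℕ, ∃ z, (z ∈ A ∧ z ∉ der f A) ∧ f z < 1 ∧ 1 - f z ≤ (1/2)^n := by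
    intro n
    induction n with
    | zero => exact ⟨z, hz, hz1, by have := hf0 z; simp; linarith⟩
    | succ n ih =>
      obtain ⟨w, hw, hw1, hw2⟩ := ih
      refine ⟨J w, hJ w hw, by rw [hfJ]; linarith, ?_⟩
      rw [hfJ, pow_succ]; linarith
  intro c hc
  obtain ⟨n, hn⟩ := exists_pow_lt_of_lt_one (sub_pos.2 hc) (by norm_num : (1/2 : ℝ) < 1)
  obtain ⟨w, hw, hw1, hw2⟩ := key n
  exact ⟨w, hw.1, hw.2, by linarith, hw1⟩

def foldI : C(unitInterval, unitInterval) :=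
  ⟨fun x => ⟨|2 * (x : ℝ) - 1|, abs_nonneg _, by
    have h0 := x.2.1
    have h1 := x.2.2
    rw [abs_le]; constructor <;> linarith⟩, by fun_prop⟩

def secI : C(unitInterval, unitInterval) :=
  ⟨fun x => ⟨(1 + (x : ℝ)) / 2, by
    have h0 := x.2.1
    linarith, by
    have h1 := x.2.2
    linarith⟩, by fun_prop⟩

def symI : C(unitInterval, unitInterval) :=
  ⟨unitInterval.symm, unitInterval.continuous_symm⟩

def onS (m : C(unitInterval, unitInterval)) : bS → bS := fun p => (p.1, (m p.2.1, p.2.2))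

lemma onS_cont (m : C(unitInterval, unitInterval)) : Continuous (onS m) := by
  unfold onS; fun_prop

def Bmap (m : C(unitInterval, unitInterval)) : StoneCech bS → StoneCech bS :=
  stoneCechExtend (continuous_stoneCechUnit.comp (onS_cont m))

lemma Bmap_cont (m) : Continuous (Bmap m) := continuous_stoneCechExtend _

lemma Bmap_unit (m) (p : bS) : Bmap m (stoneCechUnit p) = stoneCechUnit (onS m p) :=
  stoneCechExtend_stoneCechUnit _ p

lemma betaF_cont : Continuous betaF := continuous_stoneCechExtend _

lemma betaPi_cont : Continuous betaPi := continuous_stoneCechExtend _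

lemma betaF_unit (p : bS) : betaF (stoneCechUnit p) = p.2.1 :=
  stoneCechExtend_stoneCechUnit _ p

lemma betaPi_unit (p : bS) : betaPi (stoneCechUnit p) = stoneCechUnit p.1 :=
  stoneCechExtend_stoneCechUnit _ p

lemma sc_ext {Z : Type*} [TopologicalSpace Z] [T2Space Z] {g h : StoneCech bS → Z}
    (hg : Continuous g) (hh : Continuous h)
    (H : ∀ p, g (stoneCechUnit p) = h (stoneCechUnit p)) (z) : g z = h z :=
  congrFun (denseRange_stoneCechUnit.equalizer hg hh (funext H)) z

lemma betaF_Bmap (m) (z) : betaF (Bmap m z) = m (betaF z) := by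
  refine sc_ext (betaF_cont.comp (Bmap_cont m)) (m.continuous.comp betaF_cont) (fun p => ?_) z
  simp only [Function.comp, Bmap_unit, betaF_unit, onS]

lemma betaPi_Bmap (m) (z) : betaPi (Bmap m z) = betaPi z := by
  refine sc_ext (betaPi_cont.comp (Bmap_cont m)) betaPi_cont (fun p => ?_) z
  simp only [Function.comp, Bmap_unit, betaPi_unit, onS]

lemma Bmap_Bmap (m m' : C(unitInterval, unitInterval)) (z) :
    Bmap m (Bmap m' z) = Bmap (m.comp m') z := by
  refine sc_ext ((Bmap_cont m).comp (Bmap_cont m')) (Bmap_cont _) (fun p => ?_) z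
  simp only [Function.comp, Bmap_unit, onS, ContinuousMap.comp_apply]

lemma Bmap_id (z) : Bmap (ContinuousMap.id _) z = z := by
  refine sc_ext (Bmap_cont _) continuous_id (fun p => ?_) z
  simp only [Bmap_unit, onS, ContinuousMap.id_apply, id]

lemma fold_sec : foldI.comp secI = ContinuousMap.id _ := by
  ext x
  have h0 := x.2.1
  simp only [foldI, secI, ContinuousMap.comp_apply, ContinuousMap.coe_mk, ContinuousMap.id_apply]
  rw [abs_of_nonneg] <;> linarith

lemma fold_sym : foldI.comp symI = foldI := by
  ext x
  simp only [foldI, symI, ContinuousMap.comp_apply, ContinuousMap.coe_mk, unitInterval.coe_symm_eq]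
  rw [← abs_neg]; congr 1; ring

lemma sym_sym : symI.comp symI = ContinuousMap.id _ := by
  ext x
  simp [symI]

lemma sec_fold (x : unitInterval) : secI (foldI x) = x ∨ secI (foldI x) = symI x := by
  rcases le_total 0 (2 * (x : ℝ) - 1) with h | h
  · left
    ext
    simp only [foldI, secI, ContinuousMap.coe_mk, abs_of_nonneg h]
    ring
  · right
    ext
    simp only [foldI, secI, symI, ContinuousMap.coe_mk, abs_of_nonpos h, unitInterval.coe_symm_eq]
    ring

lemma fold_fiber {p q : StoneCech bS} (h : Bmap foldI p = Bmap foldI q) :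
    q = p ∨ q = Bmap symI p := by
  by_contra! H
  obtain ⟨φ, h0, h1, -⟩ := exists_continuous_zero_one_of_isClosed
    (s := {p, Bmap symI p}) (t := {q}) (Set.toFinite _).isClosed isClosed_singleton (by
      rw [Set.disjoint_singleton_right]
      rintro (h | h)
      · exact H.1 h
      · exact H.2 h)
  let ψ : StoneCech bS → ℝ := fun z => max (φ z) (φ (Bmap symI z))
  have hψ : Continuous ψ := φ.continuous.max (φ.continuous.comp (Bmap_cont _))
  have hinv : ∀ z, ψ (Bmap symI z) = ψ z := fun z => by
    simp only [ψ, Bmap_Bmap, sym_sym, Bmap_id]; exact max_comm _ _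
  have hfac : ∀ z, ψ (Bmap secI (Bmap foldI z)) = ψ z := by
    refine sc_ext (hψ.comp ((Bmap_cont _).comp (Bmap_cont _))) hψ (fun a => ?_)
    simp only [Function.comp, Bmap_unit]
    rcases sec_fold a.2.1 with e | e
    · have : onS secI (onS foldI a) = a := by simp only [onS, e]
      rw [this]
    · have : onS secI (onS foldI a) = onS symI a := by simp only [onS, e]
      rw [this, ← Bmap_unit, hinv]
  have hp : ψ p = 0 := by
    have a : φ p = 0 := h0 (Or.inl rfl)
    have b : φ (Bmap symI p) = 0 := h0 (Or.inr rfl)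
    simp only [ψ, a, b, max_self]
  have hq : 1 ≤ ψ q := by
    have a : φ q = 1 := h1 rfl
    simp only [ψ, a]; exact le_max_left _ _
  rw [← hfac, ← h, hfac, hp] at hq
  linarith

lemma fold_open : IsOpenMap (Bmap foldI) := by
  intro U hU
  have hs : Function.Surjective (Bmap foldI) := fun z =>
    ⟨Bmap secI z, by rw [Bmap_Bmap, fold_sec, Bmap_id]⟩
  have hq : IsQuotientMap (Bmap foldI) := (Bmap_cont _).isClosedMap.isQuotientMap (Bmap_cont _) hs
  rw [← hq.isOpen_preimage]
  have : Bmap foldI ⁻¹' (Bmap foldI '' U) = U ∪ Bmap symI ⁻¹' U := by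
    ext z
    constructor
    · rintro ⟨w, hw, e⟩
      rcases fold_fiber e.symm with rfl | rfl
      · exact Or.inl hw
      · exact Or.inr hw
    · rintro (h | h)
      · exact ⟨z, h, rfl⟩
      · exact ⟨_, h, by rw [Bmap_Bmap, fold_sym]⟩
  rw [this]
  exact hU.union (hU.preimage (Bmap_cont _))

def Smap (u : StoneCech ℕ) (m : C(unitInterval, unitInterval)) : Su u → Su u :=
  fun z => ⟨Bmap m z.1, by
    have := z.2
    simp only [Su, mem_preimage, mem_singleton_iff] at this ⊢
    rw [betaPi_Bmap, this]⟩

lemma Smap_cont (u m) : Continuous (Smap u m) :=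
  ((Bmap_cont m).comp continuous_subtype_val).subtype_mk _

lemma Smap_fold_open (u) : IsOpenMap (Smap u foldI) := by
  rintro _ ⟨V, hV, rfl⟩
  refine ⟨_, fold_open V hV, ?_⟩
  ext z
  constructor
  · rintro ⟨w, hw, e⟩
    have hwS : w ∈ Su u := by
      have := z.2
      simp only [Su, mem_preimage, mem_singleton_iff] at this ⊢
      rw [← this, ← e, betaPi_Bmap]
    exact ⟨⟨w, hwS⟩, hw, Subtype.ext e⟩
  · rintro ⟨w, hw, rfl⟩
    exact ⟨w.1, hw, rfl⟩

def ff (u : StoneCech ℕ) : Su u → ℝ := fun z => (fu u z : ℝ)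

lemma ff_cont (u) : Continuous (ff u) :=
  continuous_subtype_val.comp (betaF_cont.comp continuous_subtype_val)

lemma step_eq (u : StoneCech ℕ) (A : Set (Su u)) :
    A \ ⋃ t : unitInterval, relInt A (A ∩ fu u ⁻¹' {t}) = der (ff u) A := by
  ext x
  simp only [mem_diff, mem_iUnion, not_exists, der, mem_setOf_eq]
  refine and_congr_right fun hxA => ?_
  constructor
  · intro h O hO hxO
    by_contra! H
    refine h (fu u x) ⟨⟨x, hxA⟩, ?_, rfl⟩
    refine mem_interior.2 ⟨Subtype.val ⁻¹' O, ?_, hO.preimage continuous_subtype_val, hxO⟩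
    intro y hy
    exact ⟨y.2, Subtype.ext (H y.1 ⟨hy, y.2⟩)⟩
  · rintro h t ⟨y, hy, rfl⟩
    obtain ⟨_, hsub, ⟨O, hO, rfl⟩, hyO⟩ := mem_interior.1 hy
    obtain ⟨w, ⟨hwO, hwA⟩, hne⟩ := h O hO hyO
    have e1 : fu u w = t := (@hsub ⟨w, hwA⟩ hwO).2
    have e2 : fu u y = t := (interior_subset hy).2
    exact hne (by simp only [ff, e1, e2])

lemma Xseq_succ (u : StoneCech ℕ) (α : Ordinal) : Xseq u (α + 1) = der (ff u) (Xseq u α) := by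
  rw [← step_eq]
  unfold Xseq
  rw [Ordinal.limitRecOn_add_one]

lemma ff_fold (u) (x : Su u) : ff u (Smap u foldI x) = |2 * ff u x - 1| := by
  simp only [ff, fu, Smap, betaF_Bmap]; rfl

lemma Xseq_inv (u : StoneCech ℕ) (α : Ordinal) :
    IsClosed (Xseq u α) ∧ ∀ x, Smap u foldI x ∈ Xseq u α ↔ x ∈ Xseq u α := by
  induction α using Ordinal.limitRecOn with
  | zero =>
    have : Xseq u 0 = univ := by unfold Xseq; rw [Ordinal.limitRecOn_zero]
    rw [this]
    exact ⟨isClosed_univ, fun x => by simp⟩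
  | add_one α ih =>
    rw [Xseq_succ]
    exact ⟨der_closed _ ih.1, der_preimage (ff_cont u) (Smap_cont u _) (Smap_fold_open u)
      (ff_fold u) ih.2⟩
  | limit o ho ih =>
    have : Xseq u o = ⋂ (β : {β : Ordinal // β < o}), Xseq u β.1 := by
      unfold Xseq; rw [Ordinal.limitRecOn_limit _ _ _ _ ho]
    rw [this]
    refine ⟨isClosed_iInter fun β => (ih β.1 β.2).1, fun x => ?_⟩
    simp only [mem_iInter]
    exact forall_congr' fun β => (ih β.1 β.2).2 x

/-- The least ordinal `δ` with `X_δ = X_{δ+1}` is not a successor ordinal. -/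
theorem delta_not_successor (u : StoneCech ℕ)
    (hu : ∀ n : ℕ, u ≠ stoneCechUnit n)
    (hne : (Su u).Nonempty) (hcomp : IsCompact (Su u)) (hconn : IsConnected (Su u))
    (hFsp : IsFSpace (Su u))
    (hP : ∀ s r : unitInterval, s < r → IsConnected (Pset u s r))
    (δ : Ordinal) (hδ : Xseq u δ = Xseq u (δ + 1))
    (hmin : ∀ β < δ, Xseq u β ≠ Xseq u (β + 1)) :
    ∀ β : Ordinal, δ ≠ β + 1 := by
  rintro β rfl
  haveI : CompactSpace (Su u) := isCompact_iff_compactSpace.1 hcomp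
  have h1 := hmin β (Order.lt_add_one_iff.2 le_rfl)
  rw [Xseq_succ u (β + 1), Xseq_succ u β] at hδ
  rw [Xseq_succ u β] at h1
  refine der_step (G := Smap u foldI) (J := Smap u secI) (σ := Smap u symI) hFsp (ff_cont u)
    (fun x => (fu u x).2.1) (fun x => (fu u x).2.2) (Smap_cont u _) (Smap_fold_open u)
    (ff_fold u) (fun x => ?_) (fun x => ?_) (fun x => ?_) (fun x => ?_)
    (Xseq_inv u β).1 (Xseq_inv u β).2 h1 hδ
  · exact Subtype.ext (by simp only [Smap, Bmap_Bmap, fold_sec, Bmap_id])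
  · exact Subtype.ext (by simp only [Smap, Bmap_Bmap, fold_sym])
  · simp only [ff, fu, Smap, betaF_Bmap]; rfl
  · simp only [ff, fu, Smap, betaF_Bmap]; rfl

end
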